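/- The metric is of Egorov type (Proposition of Section 6): Let U ⊆ ℝ^N be open with coordinates λ₁,…,λ_N, and let ξ₁,…,ξ_N, τ : U → ℂ be C² functions with τ taking values in the upper half-plane, satisfying the elliptic Gibbons–Tsarev system, with all theta-function values appearing in denominators nonzero on U. Define g_i := (1/(4πi)) S'(ξ_i,τ)² ∂τ/∂λ_i. Then for all i ≠ k one has ∂g_i/∂λ_k = ∂g_k/∂λ_i on U, and both sides equal −(2/(4πi)²) S'(ξ_i,τ) S'(ξ_k,τ) S''(ξ_i−ξ_k,τ) (∂τ/∂λ_i)(∂τ/∂λ_k). -/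

import Mathlib

open Complex

/-- Jacobi theta function θ₁(u,τ). -/
noncomputable def theta1 (u τ : ℂ) : ℂ :=
  -∑' k : ℤ, Complex.exp ((Real.pi : ℂ) * Complex.I * τ * ((k : ℂ) + 1/2)^2
      + 2 * (Real.pi : ℂ) * Complex.I * (u + 1/2) * ((k : ℂ) + 1/2))

/-- Jacobi theta function θ₂(u,τ). -/
noncomputable def theta2 (u τ : ℂ) : ℂ :=
  ∑' k : ℤ, Complex.exp ((Real.pi : ℂ) * Complex.I * τ * ((k : ℂ) + 1/2)^2
      + 2 * (Real.pi : ℂ) * Complex.I * u * ((k : ℂ) + 1/2))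

/-- Jacobi theta function θ₃(u,τ). -/
noncomputable def theta3 (u τ : ℂ) : ℂ :=
  ∑' k : ℤ, Complex.exp ((Real.pi : ℂ) * Complex.I * τ * (k : ℂ)^2
      + 2 * (Real.pi : ℂ) * Complex.I * u * (k : ℂ))

/-- Jacobi theta function θ₄(u,τ). -/
noncomputable def theta4 (u τ : ℂ) : ℂ :=
  ∑' k : ℤ, Complex.exp ((Real.pi : ℂ) * Complex.I * τ * (k : ℂ)^2
      + 2 * (Real.pi : ℂ) * Complex.I * (u + 1/2) * (k : ℂ))

/-- ζ_a(u,τ) = θ_a'(u,τ)/θ_a(u,τ). -/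
noncomputable def zeta1 (u τ : ℂ) : ℂ := deriv (fun v => theta1 v τ) u / theta1 u τ
noncomputable def zeta2 (u τ : ℂ) : ℂ := deriv (fun v => theta2 v τ) u / theta2 u τ
noncomputable def zeta3 (u τ : ℂ) : ℂ := deriv (fun v => theta3 v τ) u / theta3 u τ
noncomputable def zeta4 (u τ : ℂ) : ℂ := deriv (fun v => theta4 v τ) u / theta4 u τ

/-- ℘_a(u,τ) = −∂_u ζ_a(u,τ). -/
noncomputable def wp1 (u τ : ℂ) : ℂ := -deriv (fun v => zeta1 v τ) u
noncomputable def wp2 (u τ : ℂ) : ℂ := -deriv (fun v => zeta2 v τ) u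
noncomputable def wp1' (u τ : ℂ) : ℂ := deriv (fun v => wp1 v τ) u
noncomputable def wp2' (u τ : ℂ) : ℂ := deriv (fun v => wp2 v τ) u

/-- S'(u,τ) = ζ₁(u,τ) − ζ₄(u,τ). -/
noncomputable def Sp (u τ : ℂ) : ℂ := zeta1 u τ - zeta4 u τ
/-- S''(u,τ) = ∂_u S'(u,τ). -/
noncomputable def Spp (u τ : ℂ) : ℂ := deriv (fun v => Sp v τ) u
/-- S'''(u,τ) = ∂_u S''(u,τ). -/
noncomputable def Sppp (u τ : ℂ) : ℂ := deriv (fun v => Spp v τ) u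

/-- Partial derivative in the j-th coordinate of a ℂ-valued function on ℝ^N. -/
noncomputable def pdC {N : ℕ} (j : Fin N) (f : (Fin N → ℝ) → ℂ) (x : Fin N → ℝ) : ℂ :=
  fderiv ℝ f x (Pi.single j 1)

/-- Partial derivative in the j-th coordinate of an ℝ-valued function on ℝ^d. -/
noncomputable def pd {d : ℕ} (j : Fin d) (f : (Fin d → ℝ) → ℝ) (x : Fin d → ℝ) : ℝ :=
  fderiv ℝ f x (Pi.single j 1)

/-- g_i = (1/(4πi)) S'(ξ_i,τ)² ∂τ/∂λ_i. -/
noncomputable def gMetric {N : ℕ} (ξ : Fin N → (Fin N → ℝ) → ℂ) (τ : (Fin N → ℝ) → ℂ)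
    (i : Fin N) (x : Fin N → ℝ) : ℂ :=
  1 / (4 * (Real.pi : ℂ) * Complex.I) * Sp (ξ i x) (τ x) ^ 2 * pdC i τ x

/-!
Write `σ = τ / 2`. The bilinear relations between theta functions of moduli `σ` and `τ`
give `θ₂(0,σ) θ₁(u,σ) = 2 θ₁(u,τ) θ₄(u,τ)`, hence `ζ₁(u,σ) = ζ₁(u,τ) + ζ₄(u,τ)`, and they express a
Wronskian of `θ₁` and `θ₄` as `θ₁'(0,σ) θ₂(u,σ)`, so that `S'(u,τ)` is a constant multiple of
`θ₂(u,σ) / θ₁(u,σ)`. For this quotient they yield the addition formula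
`S''(x + y) + S'(x + y) ζ₁(x + y,σ) = S'(x + y) (ζ₁(x,σ) + ζ₁(y,σ)) - S'(x) S'(y)`.
On the other hand, theta functions solve the heat equation `4πi ∂θ/∂τ = ∂²θ/∂u²`, and the Cole–Hopf
substitution turns it into `4πi ∂S'/∂τ = ∂/∂u (S'' + S' ζ₁(·,σ))`. The derivative of the addition
formula with `x + y = ξ_i` and `y = ξ_k` fixed thus computes `∂S'/∂τ` at `ξ_i`. In
`∂S'(ξ_i,τ)/∂λ_k` the Gibbons–Tsarev equation for `ξ_i` cancels every `ζ₁`, and in `∂g_i/∂λ_k` the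
one for `τ` cancels the remaining `℘₁`; what is left is symmetric in `i` and `k` since `S''` is
even.
-/

open Filter Function
open scoped Real Topology

/-- The partial derivative `∂θ/∂u` of a function `θ(u, τ)`. -/
noncomputable def derivFst (θ : ℂ → ℂ → ℂ) (u τ : ℂ) : ℂ := deriv (fun v => θ v τ) u

/-- The differential `a du + b dτ` on the space of pairs `(u, τ)`. -/
noncomputable def differential (a b : ℂ) : ℂ × ℂ →L[ℂ] ℂ :=
  a • ContinuousLinearMap.fst ℂ ℂ ℂ + b • ContinuousLinearMap.snd ℂ ℂ ℂ

lemma differential_apply (a b : ℂ) (p : ℂ × ℂ) : differential a b p = a * p.1 + b * p.2 := rfl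

lemma differential_sub (a b a' b' : ℂ) :
    differential a b - differential a' b' = differential (a - a') (b - b') := by
  refine ContinuousLinearMap.ext fun p => ?_
  simp only [sub_apply, differential_apply]
  ring

lemma norm_differential_le (a b : ℂ) : ‖differential a b‖ ≤ ‖a‖ + ‖b‖ :=
  ContinuousLinearMap.opNorm_le_bound _ (by positivity) fun p => by
    rw [differential_apply]
    calc ‖a * p.1 + b * p.2‖ ≤ ‖a‖ * ‖p.1‖ + ‖b‖ * ‖p.2‖ := by
          simpa only [norm_mul] using norm_add_le (a * p.1) (b * p.2)
      _ ≤ (‖a‖ + ‖b‖) * ‖p‖ := by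
          rw [add_mul]
          gcongr
          exacts [norm_fst_le p, norm_snd_le p]

lemma hasSum_differential {ι : Type*} {f g : ι → ℂ} {a b : ℂ} (hf : HasSum f a)
    (hg : HasSum g b) : HasSum (fun k => differential (f k) (g k)) (differential a b) :=
  (hf.smul_const _).add (hg.smul_const _)

lemma hasDerivAt_of_hasFDerivAt_differential {F : ℂ × ℂ → ℂ} {a b u τ : ℂ}
    (h : HasFDerivAt F (differential a b) (u, τ)) : HasDerivAt (fun v => F (v, τ)) a u := by
  simpa [differential_apply, comp_def] using
    h.comp_hasDerivAt u ((hasDerivAt_id u).prodMk (hasDerivAt_const u τ))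

lemma hasFDerivAt_div_differential {F G : ℂ × ℂ → ℂ} {p : ℂ × ℂ} {a b a' b' : ℂ}
    (hF : HasFDerivAt F (differential a b) p) (hG : HasFDerivAt G (differential a' b') p)
    (h0 : G p ≠ 0) :
    HasFDerivAt (fun q => F q / G q)
      (differential ((a * G p - F p * a') / G p ^ 2) ((b * G p - F p * b') / G p ^ 2)) p := by
  have hinv : HasFDerivAt (fun q => (G q)⁻¹) _ p := (hasDerivAt_inv h0).comp_hasFDerivAt p hG
  simp only [div_eq_mul_inv (F _)]
  refine (hF.mul hinv).congr_fderiv (ContinuousLinearMap.ext fun q => ?_)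
  simp only [add_apply, smul_apply, differential_apply, smul_eq_mul]
  field

/-! ### Theta series and the heat equation -/

/-- The `m`-th `u`-derivative of the term `exp (πi (n/2)² τ + 2πi (n/2) u)` of a theta series.
Half integers `n/2` are allowed so as to cover `θ₂` and `θ₃` alike. -/
noncomputable def thetaTerm (m : ℕ) (n : ℤ) (u τ : ℂ) : ℂ :=
  (π * I * n) ^ m * jacobiTheta₂_term n (u / 2) (τ / 4)

/-- The bound for `thetaTerm m n` on `thetaStrip S T`. -/
noncomputable def thetaBound (m : ℕ) (S T : ℝ) (n : ℤ) : ℝ :=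
  π ^ m * (|n| ^ m * Real.exp (-π * (T / 4 * n ^ 2 - 2 * (S / 2) * |n|)))

/-- A region of `(u, τ)` on which the theta series converge uniformly. -/
def thetaStrip (S T : ℝ) : Set (ℂ × ℂ) := {u | |im u| < S} ×ˢ {τ | T < im τ}

lemma isOpen_thetaStrip (S T : ℝ) : IsOpen (thetaStrip S T) :=
  (isOpen_lt (by fun_prop) continuous_const).prod (isOpen_lt continuous_const continuous_im)

lemma isPreconnected_thetaStrip (S T : ℝ) : IsPreconnected (thetaStrip S T) := by
  refine IsPreconnected.prod ?_ (convex_halfSpace_im_gt T).isPreconnected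
  simp only [abs_lt]
  exact ((convex_halfSpace_im_gt (-S)).inter (convex_halfSpace_im_lt S)).isPreconnected

lemma hasFDerivAt_thetaTerm (m : ℕ) (n : ℤ) (p : ℂ × ℂ) :
    HasFDerivAt (fun q : ℂ × ℂ => thetaTerm m n q.1 q.2)
      (differential (thetaTerm (m + 1) n p.1 p.2)
        (1 / (4 * π * I) * thetaTerm (m + 2) n p.1 p.2)) p := by
  have hscale : HasFDerivAt (fun q : ℂ × ℂ => (q.1 / 2, q.2 / 4))
      ((differential (1 / 2) 0).prod (differential 0 (1 / 4))) p := by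
    refine HasFDerivAt.prodMk ?_ ?_
    · exact (hasFDerivAt_fst.mul_const (2⁻¹ : ℂ)).congr_fderiv <|
        ContinuousLinearMap.ext fun q => by simp [differential_apply]
    · exact (hasFDerivAt_snd.mul_const (4⁻¹ : ℂ)).congr_fderiv <|
        ContinuousLinearMap.ext fun q => by simp [differential_apply]
  refine (((hasFDerivAt_jacobiTheta₂_term n _ _).comp p hscale).const_mul
    ((π * I * n) ^ m)).congr_fderiv (ContinuousLinearMap.ext fun q => ?_)
  simp only [jacobiTheta₂_term_fderiv, jacobiTheta₂_term, thetaTerm, ContinuousLinearMap.comp_apply,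
    ContinuousLinearMap.prod_apply, add_apply, smul_apply, smul_eq_mul, differential_apply,
    ContinuousLinearMap.coe_fst', ContinuousLinearMap.coe_snd', pow_succ _ (m + 1), pow_succ _ m]
  field_simp
  ring

lemma norm_thetaTerm_le {S T : ℝ} (hT : 0 < T) (m : ℕ) (n : ℤ) {u τ : ℂ} (hu : |im u| ≤ S)
    (hτ : T ≤ im τ) : ‖thetaTerm m n u τ‖ ≤ thetaBound m S T n := by
  have hu2 : |im (u / 2)| ≤ S / 2 := by
    rw [div_ofNat_im, abs_div, abs_two]
    gcongr
  have hτ4 : T / 4 ≤ im (τ / 4) := by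
    rw [div_ofNat_im]
    gcongr
  have hterm := norm_jacobiTheta₂_term_le (div_pos hT four_pos) hu2 hτ4 n
  rw [Int.cast_abs] at hterm
  rw [thetaTerm, thetaBound, norm_mul, norm_pow, norm_mul, norm_mul, norm_I, mul_one, mul_pow,
    Complex.norm_of_nonneg Real.pi_nonneg, norm_intCast, mul_assoc, Int.cast_abs]
  gcongr

lemma summable_thetaBound (m : ℕ) (e : ℤ) (S : ℝ) {T : ℝ} (hT : 0 < T) :
    Summable fun k : ℤ => thetaBound m S T (2 * k + e) :=
  ((summable_pow_mul_jacobiTheta₂_term_bound (S / 2) (div_pos hT four_pos) m).comp_injective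
    fun a b (h : 2 * a + e = 2 * b + e) => by omega).mul_left _

lemma summable_norm_thetaTerm (m : ℕ) (e : ℤ) (u : ℂ) {τ : ℂ} (hτ : 0 < im τ) :
    Summable fun k : ℤ => ‖thetaTerm m (2 * k + e) u τ‖ :=
  (summable_thetaBound m e |im u| hτ).of_nonneg_of_le (fun _ => norm_nonneg _)
    fun k => norm_thetaTerm_le hτ m (2 * k + e) le_rfl le_rfl

/-- The `m`-th `u`-derivative of the theta function with characteristic `[e/2, 0]`, which is `θ₃`
for `e = 0` and `θ₂` for `e = 1`. -/
noncomputable def thetaSeries (e : ℤ) (m : ℕ) (u τ : ℂ) : ℂ :=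
  ∑' k : ℤ, thetaTerm m (2 * k + e) u τ

lemma hasFDerivAt_thetaSeries (e : ℤ) (m : ℕ) (u : ℂ) {τ : ℂ} (hτ : 0 < im τ) :
    HasFDerivAt (fun p : ℂ × ℂ => thetaSeries e m p.1 p.2)
      (differential (thetaSeries e (m + 1) u τ)
        (1 / (4 * π * I) * thetaSeries e (m + 2) u τ)) (u, τ) := by
  obtain ⟨T, hT, hTτ⟩ := exists_between hτ
  obtain ⟨S, hS⟩ := exists_gt |im u|
  have hmem : (u, τ) ∈ thetaStrip S T := ⟨hS, hTτ⟩
  have hsum (m : ℕ) : Summable fun k : ℤ => thetaTerm m (2 * k + e) u τ :=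
    (summable_norm_thetaTerm m e u hτ).of_norm
  have hbound : ∀ (k : ℤ), ∀ p ∈ thetaStrip S T,
      ‖differential (thetaTerm (m + 1) (2 * k + e) p.1 p.2)
        (1 / (4 * π * I) * thetaTerm (m + 2) (2 * k + e) p.1 p.2)‖ ≤
      thetaBound (m + 1) S T (2 * k + e)
        + ‖1 / (4 * π * I)‖ * thetaBound (m + 2) S T (2 * k + e) := fun k p hp => by
    refine (norm_differential_le _ _).trans (add_le_add ?_ ?_)
    · exact norm_thetaTerm_le hT _ _ hp.1.le hp.2.le
    · rw [norm_mul]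
      gcongr
      exact norm_thetaTerm_le hT _ _ hp.1.le hp.2.le
  refine (hasFDerivAt_tsum_of_isPreconnected
    ((summable_thetaBound (m + 1) e S hT).add ((summable_thetaBound (m + 2) e S hT).mul_left _))
    (isOpen_thetaStrip S T) (isPreconnected_thetaStrip S T)
    (fun k p _ => hasFDerivAt_thetaTerm m (2 * k + e) p) hbound hmem (hsum m) hmem).congr_fderiv ?_
  exact (hasSum_differential (hsum (m + 1)).hasSum ((hsum (m + 2)).hasSum.mul_left _)).tsum_eq

/-- `θ` solves the heat equation `4πi ∂θ/∂τ = ∂²θ/∂u²` on `0 < im τ`, and so does each of its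
`u`-derivatives, in the sense of Fréchet derivatives in `(u, τ)`. -/
def IsHeatSolution (θ : ℂ → ℂ → ℂ) : Prop :=
  ∀ (m : ℕ) (u : ℂ) {τ : ℂ}, 0 < im τ →
    HasFDerivAt (fun p : ℂ × ℂ => derivFst^[m] θ p.1 p.2)
      (differential (derivFst^[m + 1] θ u τ) (1 / (4 * π * I) * derivFst^[m + 2] θ u τ)) (u, τ)

lemma iterate_derivFst_thetaSeries (e : ℤ) (m : ℕ) (u : ℂ) {τ : ℂ} (hτ : 0 < im τ) :
    derivFst^[m] (thetaSeries e 0) u τ = thetaSeries e m u τ := by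
  induction m generalizing u with
  | zero => rfl
  | succ m ih =>
    rw [iterate_succ_apply', derivFst, funext ih]
    exact (hasDerivAt_of_hasFDerivAt_differential (hasFDerivAt_thetaSeries e m u hτ)).deriv

lemma eventually_im_snd_pos (u : ℂ) {τ : ℂ} (hτ : 0 < im τ) :
    ∀ᶠ p : ℂ × ℂ in 𝓝 (u, τ), 0 < im p.2 :=
  (isOpen_lt continuous_const (by fun_prop)).mem_nhds hτ

lemma isHeatSolution_thetaSeries (e : ℤ) : IsHeatSolution (thetaSeries e 0) := by
  intro m u τ hτ
  rw [iterate_derivFst_thetaSeries e _ u hτ, iterate_derivFst_thetaSeries e _ u hτ]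
  refine (hasFDerivAt_thetaSeries e m u hτ).congr_of_eventuallyEq ?_
  filter_upwards [eventually_im_snd_pos u hτ] with p hp
  exact iterate_derivFst_thetaSeries e m p.1 hp

namespace IsHeatSolution

variable {θ : ℂ → ℂ → ℂ} {τ : ℂ}

lemma hasDerivAt (hθ : IsHeatSolution θ) (m : ℕ) (u : ℂ) (hτ : 0 < im τ) :
    HasDerivAt (fun v => derivFst^[m] θ v τ) (derivFst^[m + 1] θ u τ) u :=
  hasDerivAt_of_hasFDerivAt_differential (hθ m u hτ)

lemma hasDerivAt_derivFst (hθ : IsHeatSolution θ) (u : ℂ) (hτ : 0 < im τ) :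
    HasDerivAt (fun v => θ v τ) (derivFst θ u τ) u :=
  hθ.hasDerivAt 0 u hτ

lemma const_mul_comp_add (hθ : IsHeatSolution θ) (c b : ℂ) :
    IsHeatSolution fun u τ => c * θ (u + b) τ := by
  have hiter (m : ℕ) :
      derivFst^[m] (fun u τ => c * θ (u + b) τ) = fun u τ => c * derivFst^[m] θ (u + b) τ := by
    induction m with
    | zero => rfl
    | succ m ih =>
      ext u τ
      rw [iterate_succ_apply', ih, iterate_succ_apply', derivFst, deriv_const_mul_field,
        deriv_comp_add_const (f := fun v => derivFst^[m] θ v τ)]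
      rfl
  intro m u τ hτ
  rw [hiter, hiter, hiter]
  have hshift : HasFDerivAt (fun p : ℂ × ℂ => (p.1 + b, p.2))
      ((ContinuousLinearMap.fst ℂ ℂ ℂ).prod (ContinuousLinearMap.snd ℂ ℂ ℂ)) (u, τ) :=
    (hasFDerivAt_fst.add_const b).prodMk hasFDerivAt_snd
  refine (((hθ m (u + b) hτ).comp (u, τ) hshift).const_mul c).congr_fderiv
    (ContinuousLinearMap.ext fun q => ?_)
  simp only [differential_apply, ContinuousLinearMap.fst_prod_snd, ContinuousLinearMap.comp_id,
    smul_apply, smul_eq_mul]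
  ring

end IsHeatSolution

/-! ### Theta functions of modulus `τ / 2` -/

lemma im_half_pos {τ : ℂ} (hτ : 0 < im τ) : 0 < im (τ / 2) := by
  rw [div_ofNat_im]
  exact half_pos hτ

lemma theta2_eq_thetaSeries : theta2 = thetaSeries 1 0 := by
  ext u τ
  refine tsum_congr fun k => ?_
  rw [thetaTerm, pow_zero, one_mul, jacobiTheta₂_term]
  congr 1
  push_cast
  ring

lemma theta3_eq_thetaSeries : theta3 = thetaSeries 0 0 := by
  ext u τ
  refine tsum_congr fun k => ?_
  rw [thetaTerm, pow_zero, one_mul, jacobiTheta₂_term]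
  congr 1
  push_cast
  ring

lemma theta1_eq_neg_theta2 (u τ : ℂ) : theta1 u τ = -theta2 (u + 1 / 2) τ := rfl

lemma theta4_eq_theta3 (u τ : ℂ) : theta4 u τ = theta3 (u + 1 / 2) τ := rfl

lemma isHeatSolution_theta2 : IsHeatSolution theta2 :=
  theta2_eq_thetaSeries ▸ isHeatSolution_thetaSeries 1

lemma isHeatSolution_theta3 : IsHeatSolution theta3 :=
  theta3_eq_thetaSeries ▸ isHeatSolution_thetaSeries 0

lemma isHeatSolution_theta1 : IsHeatSolution theta1 := by
  simpa only [neg_one_mul, ← theta1_eq_neg_theta2] using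
    isHeatSolution_theta2.const_mul_comp_add (-1) (1 / 2)

lemma isHeatSolution_theta4 : IsHeatSolution theta4 := by
  simpa only [one_mul, ← theta4_eq_theta3] using
    isHeatSolution_theta3.const_mul_comp_add 1 (1 / 2)

lemma theta2_add_one (u τ : ℂ) : theta2 (u + 1) τ = -theta2 u τ := by
  rw [theta2, theta2, ← tsum_neg]
  refine tsum_congr fun k => ?_
  rw [← mul_neg_one, ← exp_pi_mul_I, ← exp_add, exp_eq_exp_iff_exists_int]
  exact ⟨k, by ring⟩

lemma theta3_add_one (u τ : ℂ) : theta3 (u + 1) τ = theta3 u τ := by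
  refine tsum_congr fun k => ?_
  rw [exp_eq_exp_iff_exists_int]
  exact ⟨k, by ring⟩

lemma theta2_neg (u τ : ℂ) : theta2 (-u) τ = theta2 u τ := by
  rw [theta2, ← (Equiv.subLeft (-1 : ℤ)).tsum_eq]
  refine tsum_congr fun k => congrArg exp ?_
  rw [Equiv.subLeft_apply]
  push_cast
  ring

lemma theta3_neg (u τ : ℂ) : theta3 (-u) τ = theta3 u τ := by
  rw [theta3, ← (Equiv.neg ℤ).tsum_eq]
  refine tsum_congr fun k => congrArg exp ?_
  rw [Equiv.neg_apply]
  push_cast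
  ring

lemma theta2_sub_half (u τ : ℂ) : theta2 (u - 1 / 2) τ = theta1 u τ := by
  rw [theta1_eq_neg_theta2, show u + 1 / 2 = u - 1 / 2 + 1 by ring, theta2_add_one, neg_neg]

lemma theta3_sub_half (u τ : ℂ) : theta3 (u - 1 / 2) τ = theta4 u τ := by
  rw [theta4_eq_theta3, show u + 1 / 2 = u - 1 / 2 + 1 by ring, theta3_add_one]

lemma theta1_neg (u τ : ℂ) : theta1 (-u) τ = -theta1 u τ := by
  rw [theta1_eq_neg_theta2, ← theta2_neg, ← theta2_sub_half, neg_add, neg_neg, sub_eq_add_neg]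

lemma theta4_neg (u τ : ℂ) : theta4 (-u) τ = theta4 u τ := by
  rw [theta4_eq_theta3, ← theta3_neg, ← theta3_sub_half, neg_add, neg_neg, sub_eq_add_neg]

lemma thetaTerm_half_mul (a b : ℤ) (x y τ : ℂ) :
    thetaTerm 0 (a + b) x (τ / 2) * thetaTerm 0 (a - b) y (τ / 2) =
      thetaTerm 0 a (x + y) τ * thetaTerm 0 b (x - y) τ := by
  simp only [thetaTerm, pow_zero, one_mul, jacobiTheta₂_term, ← exp_add]
  congr 1
  push_cast
  ring

/-- Parametrizes the pairs of odd integers `(2k + 1, 2l + 1) = (a + b, a - b)` by the pairs `(a, b)`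
of opposite parity: `a = 2i`, `b = 2j + 1` on the left, `a = 2i + 1`, `b = 2j` on the right. -/
def oddPairMap : (ℤ × ℤ) ⊕ (ℤ × ℤ) → ℤ × ℤ
  | .inl (i, j) => (i + j, i - j - 1)
  | .inr (i, j) => (i + j, i - j)

lemma bijective_oddPairMap : Bijective oddPairMap := by
  constructor
  · rintro (⟨i, j⟩ | ⟨i, j⟩) (⟨k, l⟩ | ⟨k, l⟩) h <;>
      simp only [oddPairMap, Prod.mk.injEq, Sum.inl.injEq, Sum.inr.injEq, reduceCtorEq] at h ⊢ <;>
      omega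
  · rintro ⟨k, l⟩
    obtain ⟨i, hi | hi⟩ := Int.even_or_odd' (k + l)
    · exact ⟨.inr (i, k - i), Prod.ext (by simp [oddPairMap]) (by simp only [oddPairMap]; omega)⟩
    · exact ⟨.inl (i + 1, k - i - 1), Prod.ext (by simp [oddPairMap])
        (by simp only [oddPairMap]; omega)⟩

lemma hasSum_thetaTerm_mul (e e' : ℤ) (x y : ℂ) {τ : ℂ} (hτ : 0 < im τ) :
    HasSum (fun p : ℤ × ℤ => thetaTerm 0 (2 * p.1 + e) x τ * thetaTerm 0 (2 * p.2 + e') y τ)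
      (thetaSeries e 0 x τ * thetaSeries e' 0 y τ) := by
  have hx := summable_norm_thetaTerm 0 e x hτ
  have hy := summable_norm_thetaTerm 0 e' y hτ
  rw [thetaSeries, thetaSeries, tsum_mul_tsum_of_summable_norm hx hy]
  exact (summable_mul_of_summable_norm hx hy).hasSum

lemma theta2_mul_theta2_half (x y : ℂ) {τ : ℂ} (hτ : 0 < im τ) :
    theta2 x (τ / 2) * theta2 y (τ / 2) =
      theta3 (x + y) τ * theta2 (x - y) τ + theta2 (x + y) τ * theta3 (x - y) τ := by
  rw [theta2_eq_thetaSeries, theta3_eq_thetaSeries]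
  refine (hasSum_thetaTerm_mul 1 1 x y (im_half_pos hτ)).unique ?_
  rw [← (Equiv.ofBijective _ bijective_oddPairMap).hasSum_iff]
  refine HasSum.sum ?_ ?_
  · convert hasSum_thetaTerm_mul 0 1 (x + y) (x - y) hτ using 2 with p
    simp only [comp_apply, Equiv.ofBijective_apply, oddPairMap, ← thetaTerm_half_mul]
    ring_nf
  · convert hasSum_thetaTerm_mul 1 0 (x + y) (x - y) hτ using 2 with p
    simp only [comp_apply, Equiv.ofBijective_apply, oddPairMap, ← thetaTerm_half_mul]
    ring_nf

lemma theta1_mul_theta1_half (x y : ℂ) {τ : ℂ} (hτ : 0 < im τ) :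
    theta1 x (τ / 2) * theta1 y (τ / 2) =
      theta3 (x + y) τ * theta2 (x - y) τ - theta2 (x + y) τ * theta3 (x - y) τ := by
  rw [theta1_eq_neg_theta2, theta1_eq_neg_theta2, neg_mul_neg, theta2_mul_theta2_half _ _ hτ,
    add_add_add_comm, add_halves, add_sub_add_right_eq_sub, theta3_add_one, theta2_add_one]
  ring

lemma theta2_mul_theta1_half (x y : ℂ) {τ : ℂ} (hτ : 0 < im τ) :
    theta2 x (τ / 2) * theta1 y (τ / 2) =
      theta1 (x + y) τ * theta4 (x - y) τ - theta4 (x + y) τ * theta1 (x - y) τ := by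
  rw [theta1_eq_neg_theta2 y, mul_neg, theta2_mul_theta2_half _ _ hτ, ← add_assoc, ← sub_sub,
    theta2_sub_half, theta3_sub_half, theta1_eq_neg_theta2 (x + y), theta4_eq_theta3 (x + y)]
  ring

lemma theta2_zero_mul_theta1_half (u : ℂ) {τ : ℂ} (hτ : 0 < im τ) :
    theta2 0 (τ / 2) * theta1 u (τ / 2) = 2 * (theta1 u τ * theta4 u τ) := by
  rw [theta2_mul_theta1_half 0 u hτ, zero_add, zero_sub, theta1_neg, theta4_neg]
  ring

lemma theta2_zero_mul_theta2_half (u : ℂ) {τ : ℂ} (hτ : 0 < im τ) :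
    theta2 0 (τ / 2) * theta2 u (τ / 2) = 2 * (theta2 u τ * theta3 u τ) := by
  rw [mul_comm, theta2_mul_theta2_half u 0 hτ, add_zero, sub_zero]
  ring

lemma theta2_zero_mul_derivFst_theta2_half (u : ℂ) {τ : ℂ} (hτ : 0 < im τ) :
    theta2 0 (τ / 2) * derivFst theta2 u (τ / 2) =
      2 * (derivFst theta2 u τ * theta3 u τ + theta2 u τ * derivFst theta3 u τ) := by
  have h := (isHeatSolution_theta2.hasDerivAt_derivFst u (im_half_pos hτ)).const_mul
    (theta2 0 (τ / 2))
  simp only [theta2_zero_mul_theta2_half _ hτ] at h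
  exact h.unique (((isHeatSolution_theta2.hasDerivAt_derivFst u hτ).mul
    (isHeatSolution_theta3.hasDerivAt_derivFst u hτ)).const_mul 2)

lemma hasDerivAt_comp_const_add_zero {f : ℂ → ℂ} {f' x : ℂ} (hf : HasDerivAt f f' x) :
    HasDerivAt (fun y => f (x + y)) f' 0 :=
  HasDerivAt.comp_const_add x 0 (by rwa [add_zero])

lemma hasDerivAt_add_mul_sub_sub {f g : ℂ → ℂ} {f' g' x : ℂ} (hf : HasDerivAt f f' x)
    (hg : HasDerivAt g g' x) :
    HasDerivAt (fun y => f (x + y) * g (x - y) - g (x + y) * f (x - y))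
      (2 * (f' * g x - g' * f x)) 0 := by
  have hsub {h : ℂ → ℂ} {h' : ℂ} (hh : HasDerivAt h h' x) :
      HasDerivAt (fun y => h (x - y)) (-h') 0 :=
    HasDerivAt.comp_const_sub x 0 (by rwa [sub_zero])
  refine (((hasDerivAt_comp_const_add_zero hf).mul (hsub hg)).sub
    ((hasDerivAt_comp_const_add_zero hg).mul (hsub hf))).congr_deriv ?_
  rw [add_zero, sub_zero]
  ring

lemma derivFst_theta1_zero_mul_theta1_half (u : ℂ) {τ : ℂ} (hτ : 0 < im τ) :
    derivFst theta1 0 (τ / 2) * theta1 u (τ / 2) =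
      2 * (derivFst theta3 u τ * theta2 u τ - derivFst theta2 u τ * theta3 u τ) := by
  have h := (isHeatSolution_theta1.hasDerivAt_derivFst 0 (im_half_pos hτ)).const_mul
    (theta1 u (τ / 2))
  simp only [theta1_mul_theta1_half u _ hτ] at h
  rw [mul_comm]
  exact h.unique (hasDerivAt_add_mul_sub_sub (isHeatSolution_theta3.hasDerivAt_derivFst u hτ)
    (isHeatSolution_theta2.hasDerivAt_derivFst u hτ))

lemma derivFst_theta1_zero_mul_theta2_half (u : ℂ) {τ : ℂ} (hτ : 0 < im τ) :
    derivFst theta1 0 (τ / 2) * theta2 u (τ / 2) =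
      2 * (derivFst theta1 u τ * theta4 u τ - derivFst theta4 u τ * theta1 u τ) := by
  have h := (isHeatSolution_theta1.hasDerivAt_derivFst 0 (im_half_pos hτ)).const_mul
    (theta2 u (τ / 2))
  simp only [theta2_mul_theta1_half u _ hτ] at h
  rw [mul_comm]
  exact h.unique (hasDerivAt_add_mul_sub_sub (isHeatSolution_theta1.hasDerivAt_derivFst u hτ)
    (isHeatSolution_theta4.hasDerivAt_derivFst u hτ))

lemma derivFst_theta1_mul_theta1_add_half (x y : ℂ) {τ : ℂ} (hτ : 0 < im τ) :
    derivFst theta1 x (τ / 2) * theta1 y (τ / 2) + theta1 x (τ / 2) * derivFst theta1 y (τ / 2) =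
      2 * (derivFst theta3 (x + y) τ * theta2 (x - y) τ
        - derivFst theta2 (x + y) τ * theta3 (x - y) τ) := by
  have hleft := (hasDerivAt_comp_const_add_zero
    (isHeatSolution_theta1.hasDerivAt_derivFst x (im_half_pos hτ))).fun_mul
    (hasDerivAt_comp_const_add_zero
      (isHeatSolution_theta1.hasDerivAt_derivFst y (im_half_pos hτ)))
  simp only [theta1_mul_theta1_half _ _ hτ, add_sub_add_right_eq_sub, add_zero] at hleft
  have hright {θ : ℂ → ℂ → ℂ} (hθ : IsHeatSolution θ) :
      HasDerivAt (fun t => θ (x + t + (y + t)) τ) (derivFst θ (x + y) τ * (1 + 1)) 0 :=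
    (hθ.hasDerivAt_derivFst (x + y) hτ).comp_of_eq 0
      (((hasDerivAt_id 0).const_add x).add ((hasDerivAt_id 0).const_add y)) (by simp)
  have h := hleft.unique (((hright isHeatSolution_theta3).mul_const _).sub
    ((hright isHeatSolution_theta2).mul_const _))
  linear_combination h

lemma theta_addition_formula_half (x y : ℂ) {τ : ℂ} (hτ : 0 < im τ) :
    theta2 0 (τ / 2) * theta2 (x + y) (τ / 2)
        * (derivFst theta1 x (τ / 2) * theta1 y (τ / 2)
          + theta1 x (τ / 2) * derivFst theta1 y (τ / 2))
      - derivFst theta1 0 (τ / 2) * theta1 (x + y) (τ / 2) * (theta2 x (τ / 2) * theta2 y (τ / 2))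
      = theta2 0 (τ / 2) * derivFst theta2 (x + y) (τ / 2)
        * (theta1 x (τ / 2) * theta1 y (τ / 2)) := by
  rw [theta2_zero_mul_theta2_half _ hτ, theta2_zero_mul_derivFst_theta2_half _ hτ,
    derivFst_theta1_zero_mul_theta1_half _ hτ, derivFst_theta1_mul_theta1_add_half _ _ hτ,
    theta2_mul_theta2_half _ _ hτ, theta1_mul_theta1_half _ _ hτ]
  ring

namespace IsHeatSolution

variable {θ : ℂ → ℂ → ℂ} {u τ : ℂ}

lemma hasFDerivAt_derivFst_div (hθ : IsHeatSolution θ) (hτ : 0 < im τ) (h0 : θ u τ ≠ 0) :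
    HasFDerivAt (fun p : ℂ × ℂ => derivFst θ p.1 p.2 / θ p.1 p.2)
      (differential (deriv (fun v => derivFst θ v τ / θ v τ) u)
        (1 / (4 * π * I) * deriv (fun v => derivFst^[2] θ v τ / θ v τ) u)) (u, τ) := by
  have h := hasFDerivAt_div_differential (hθ 1 u hτ) (hθ 0 u hτ) h0
  have h2 := (hθ.hasDerivAt 2 u hτ).fun_div (hθ.hasDerivAt_derivFst u hτ) h0
  refine h.congr_fderiv (congrArg₂ differential ?_ ?_)
  · exact (hasDerivAt_of_hasFDerivAt_differential h).deriv.symm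
  · refine Eq.trans ?_ (congrArg (1 / (4 * π * I) * ·) h2.deriv.symm)
    simp only [iterate_succ_apply', iterate_zero_apply]
    ring

lemma iterate_derivFst_two_div_eq (hθ : IsHeatSolution θ) (hτ : 0 < im τ) (h0 : θ u τ ≠ 0) :
    derivFst^[2] θ u τ / θ u τ =
      deriv (fun v => derivFst θ v τ / θ v τ) u + (derivFst θ u τ / θ u τ) ^ 2 := by
  have h := (hθ.hasDerivAt 1 u hτ).fun_div (hθ.hasDerivAt_derivFst u hτ) h0
  rw [show deriv (fun v => derivFst θ v τ / θ v τ) u = _ from h.deriv]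
  simp only [iterate_succ_apply', iterate_zero_apply]
  field

lemma differentiableAt_iterate_derivFst_two_div (hθ : IsHeatSolution θ) (hτ : 0 < im τ)
    (h0 : θ u τ ≠ 0) : DifferentiableAt ℂ (fun v => derivFst^[2] θ v τ / θ v τ) u :=
  ((hθ.hasDerivAt 2 u hτ).fun_div (hθ.hasDerivAt_derivFst u hτ) h0).differentiableAt

end IsHeatSolution

/-! ### Logarithmic derivatives of theta functions -/

/-- `(u, τ)` lies in the domain of holomorphy of `S' = ζ₁ - ζ₄`. -/
structure IsRegularSp (u τ : ℂ) : Prop where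
  im_pos : 0 < im τ
  theta1_ne_zero : theta1 u τ ≠ 0
  theta4_ne_zero : theta4 u τ ≠ 0

section Parity

variable {𝕜 F : Type*} [NontriviallyNormedField 𝕜] [NormedAddCommGroup F] [NormedSpace 𝕜 F]
  {f : 𝕜 → F}

lemma odd_deriv_of_even (hf : f.Even) : (deriv f).Odd := fun x => by
  rw [← neg_eq_iff_eq_neg, ← deriv_comp_neg]
  exact congrArg (deriv · x) (funext hf)

lemma even_deriv_of_odd (hf : f.Odd) : (deriv f).Even := fun x => by
  rw [← neg_inj, ← deriv_comp_neg, ← deriv.fun_neg]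
  exact congrArg (deriv · x) (funext hf)

end Parity

lemma zeta1_eq_derivFst_div (u τ : ℂ) : zeta1 u τ = derivFst theta1 u τ / theta1 u τ := rfl

lemma zeta4_eq_derivFst_div (u τ : ℂ) : zeta4 u τ = derivFst theta4 u τ / theta4 u τ := rfl

lemma odd_zeta1 (τ : ℂ) : (fun u => zeta1 u τ).Odd := fun u => by
  have heven : (fun u => deriv (fun v => theta1 v τ) u).Even :=
    even_deriv_of_odd fun v => theta1_neg v τ
  simp only [zeta1, theta1_neg, heven u, div_neg]

lemma odd_zeta4 (τ : ℂ) : (fun u => zeta4 u τ).Odd := fun u => by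
  have hodd : (fun u => deriv (fun v => theta4 v τ) u).Odd :=
    odd_deriv_of_even fun v => theta4_neg v τ
  simp only [zeta4, theta4_neg, hodd u, neg_div]

lemma zeta1_neg (u τ : ℂ) : zeta1 (-u) τ = -zeta1 u τ := odd_zeta1 τ u

lemma odd_Sp (τ : ℂ) : (fun u => Sp u τ).Odd := fun u => by
  simp only [Sp, zeta1_neg, odd_zeta4 τ u, neg_sub_neg, neg_sub]

lemma wp1_neg (u τ : ℂ) : wp1 (-u) τ = wp1 u τ :=
  congrArg (- ·) (even_deriv_of_odd (odd_zeta1 τ) u)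

lemma Spp_neg (u τ : ℂ) : Spp (-u) τ = Spp u τ := even_deriv_of_odd (odd_Sp τ) u

namespace IsRegularSp

variable {u τ : ℂ}

lemma eventually (h : IsRegularSp u τ) : ∀ᶠ v in 𝓝 u, IsRegularSp v τ := by
  have h₁ := (isHeatSolution_theta1.hasDerivAt_derivFst u h.im_pos).continuousAt
  have h₄ := (isHeatSolution_theta4.hasDerivAt_derivFst u h.im_pos).continuousAt
  filter_upwards [h₁.eventually_ne h.theta1_ne_zero, h₄.eventually_ne h.theta4_ne_zero] with v
  exact .mk h.im_pos

lemma neg (h : IsRegularSp u τ) : IsRegularSp (-u) τ where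
  im_pos := h.im_pos
  theta1_ne_zero := by rw [theta1_neg]; exact neg_ne_zero.mpr h.theta1_ne_zero
  theta4_ne_zero := by rw [theta4_neg]; exact h.theta4_ne_zero

lemma theta2_zero_mul_theta1_half_ne_zero (h : IsRegularSp u τ) :
    theta2 0 (τ / 2) * theta1 u (τ / 2) ≠ 0 := by
  rw [theta2_zero_mul_theta1_half u h.im_pos]
  exact mul_ne_zero two_ne_zero (mul_ne_zero h.theta1_ne_zero h.theta4_ne_zero)

lemma theta2_zero_half_ne_zero (h : IsRegularSp u τ) : theta2 0 (τ / 2) ≠ 0 :=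
  left_ne_zero_of_mul h.theta2_zero_mul_theta1_half_ne_zero

lemma theta1_half_ne_zero (h : IsRegularSp u τ) : theta1 u (τ / 2) ≠ 0 :=
  right_ne_zero_of_mul h.theta2_zero_mul_theta1_half_ne_zero

lemma zeta1_half (h : IsRegularSp u τ) : zeta1 u (τ / 2) = zeta1 u τ + zeta4 u τ :=
  calc zeta1 u (τ / 2) = logDeriv (fun v => theta2 0 (τ / 2) * theta1 v (τ / 2)) u :=
        (logDeriv_const_mul u _ h.theta2_zero_half_ne_zero).symm
    _ = logDeriv (fun v => theta1 v τ * theta4 v τ) u := by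
        simp only [theta2_zero_mul_theta1_half _ h.im_pos]
        exact logDeriv_const_mul u _ two_ne_zero
    _ = zeta1 u τ + zeta4 u τ := logDeriv_mul u h.theta1_ne_zero h.theta4_ne_zero
        (isHeatSolution_theta1.hasDerivAt_derivFst u h.im_pos).differentiableAt
        (isHeatSolution_theta4.hasDerivAt_derivFst u h.im_pos).differentiableAt

lemma Sp_eq (h : IsRegularSp u τ) :
    Sp u τ = derivFst theta1 0 (τ / 2) / theta2 0 (τ / 2)
      * (theta2 u (τ / 2) / theta1 u (τ / 2)) := by
  have h₁ := h.theta1_ne_zero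
  have h₄ := h.theta4_ne_zero
  rw [div_mul_div_comm, derivFst_theta1_zero_mul_theta2_half u h.im_pos,
    theta2_zero_mul_theta1_half u h.im_pos, mul_div_mul_left _ _ two_ne_zero, Sp,
    zeta1_eq_derivFst_div, zeta4_eq_derivFst_div]
  field

lemma hasFDerivAt_zeta1 (h : IsRegularSp u τ) :
    HasFDerivAt (fun p : ℂ × ℂ => zeta1 p.1 p.2) (differential (deriv (fun v => zeta1 v τ) u)
      (1 / (4 * π * I) * deriv (fun v => derivFst^[2] theta1 v τ / theta1 v τ) u)) (u, τ) :=
  isHeatSolution_theta1.hasFDerivAt_derivFst_div h.im_pos h.theta1_ne_zero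

lemma hasFDerivAt_zeta4 (h : IsRegularSp u τ) :
    HasFDerivAt (fun p : ℂ × ℂ => zeta4 p.1 p.2) (differential (deriv (fun v => zeta4 v τ) u)
      (1 / (4 * π * I) * deriv (fun v => derivFst^[2] theta4 v τ / theta4 v τ) u)) (u, τ) :=
  isHeatSolution_theta4.hasFDerivAt_derivFst_div h.im_pos h.theta4_ne_zero

lemma hasDerivAt_Sp (h : IsRegularSp u τ) : HasDerivAt (fun v => Sp v τ) (Spp u τ) u :=
  ((hasDerivAt_of_hasFDerivAt_differential h.hasFDerivAt_zeta1).sub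
    (hasDerivAt_of_hasFDerivAt_differential h.hasFDerivAt_zeta4)).differentiableAt.hasDerivAt

lemma Spp_eq_sub (h : IsRegularSp u τ) :
    Spp u τ = deriv (fun v => zeta1 v τ) u - deriv (fun v => zeta4 v τ) u :=
  h.hasDerivAt_Sp.unique <| (hasDerivAt_of_hasFDerivAt_differential h.hasFDerivAt_zeta1).sub
    (hasDerivAt_of_hasFDerivAt_differential h.hasFDerivAt_zeta4)

lemma iterate_derivFst_two_div_sub_eq (h : IsRegularSp u τ) :
    derivFst^[2] theta1 u τ / theta1 u τ - derivFst^[2] theta4 u τ / theta4 u τ =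
      Spp u τ + Sp u τ * zeta1 u (τ / 2) := by
  rw [isHeatSolution_theta1.iterate_derivFst_two_div_eq h.im_pos h.theta1_ne_zero,
    isHeatSolution_theta4.iterate_derivFst_two_div_eq h.im_pos h.theta4_ne_zero, h.zeta1_half,
    h.Spp_eq_sub, Sp]
  simp only [zeta1_eq_derivFst_div, zeta4_eq_derivFst_div]
  ring

lemma hasFDerivAt_Sp (h : IsRegularSp u τ) :
    HasFDerivAt (fun p : ℂ × ℂ => Sp p.1 p.2) (differential (Spp u τ)
      (1 / (4 * π * I) * deriv (fun v => Spp v τ + Sp v τ * zeta1 v (τ / 2)) u)) (u, τ) := by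
  have hflux : deriv (fun v => Spp v τ + Sp v τ * zeta1 v (τ / 2)) u =
      deriv (fun v => derivFst^[2] theta1 v τ / theta1 v τ) u
        - deriv (fun v => derivFst^[2] theta4 v τ / theta4 v τ) u := by
    rw [← deriv_fun_sub
      (isHeatSolution_theta1.differentiableAt_iterate_derivFst_two_div h.im_pos h.theta1_ne_zero)
      (isHeatSolution_theta4.differentiableAt_iterate_derivFst_two_div h.im_pos h.theta4_ne_zero)]
    exact EventuallyEq.deriv_eq <|
      h.eventually.mono fun v hv => hv.iterate_derivFst_two_div_sub_eq.symm
  rw [h.Spp_eq_sub, hflux, mul_sub, ← differential_sub]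
  exact h.hasFDerivAt_zeta1.sub h.hasFDerivAt_zeta4

lemma hasDerivAt_zeta1_half (h : IsRegularSp u τ) :
    HasDerivAt (fun v => zeta1 v (τ / 2)) (-wp1 u (τ / 2)) u := by
  have h₁ := hasDerivAt_of_hasFDerivAt_differential <|
    isHeatSolution_theta1.hasFDerivAt_derivFst_div (im_half_pos h.im_pos) h.theta1_half_ne_zero
  rw [wp1, neg_neg]
  exact h₁.differentiableAt.hasDerivAt

lemma Spp_add_Sp_mul_zeta1_half_eq (h : IsRegularSp u τ) :
    Spp u τ + Sp u τ * zeta1 u (τ / 2) =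
      derivFst theta1 0 (τ / 2) / theta2 0 (τ / 2)
        * (derivFst theta2 u (τ / 2) / theta1 u (τ / 2)) := by
  have hσ := im_half_pos h.im_pos
  have h₁ := h.theta1_half_ne_zero
  have hderiv := ((isHeatSolution_theta2.hasDerivAt_derivFst u hσ).fun_div
    (isHeatSolution_theta1.hasDerivAt_derivFst u hσ) h₁).const_mul
    (derivFst theta1 0 (τ / 2) / theta2 0 (τ / 2))
  rw [h.hasDerivAt_Sp.unique (hderiv.congr_of_eventuallyEq (h.eventually.mono fun _ => Sp_eq)),
    h.Sp_eq, zeta1_eq_derivFst_div]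
  field

lemma Sp_addition_formula {x y : ℂ} (hx : IsRegularSp x τ) (hy : IsRegularSp y τ)
    (hxy : IsRegularSp (x + y) τ) :
    Spp (x + y) τ + Sp (x + y) τ * zeta1 (x + y) (τ / 2) =
      Sp (x + y) τ * (zeta1 x (τ / 2) + zeta1 y (τ / 2)) - Sp x τ * Sp y τ := by
  have h₂ := hx.theta2_zero_half_ne_zero
  have hx₁ := hx.theta1_half_ne_zero
  have hy₁ := hy.theta1_half_ne_zero
  have hxy₁ := hxy.theta1_half_ne_zero
  have hθ := theta_addition_formula_half x y hx.im_pos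
  rw [hxy.Spp_add_Sp_mul_zeta1_half_eq, hx.Sp_eq, hy.Sp_eq, hxy.Sp_eq,
    zeta1_eq_derivFst_div, zeta1_eq_derivFst_div]
  field_simp
  linear_combination -derivFst theta1 0 (τ / 2) * hθ

lemma hasDerivAt_Spp_add_Sp_mul_zeta1_half {a b : ℂ} (ha : IsRegularSp a τ)
    (hb : IsRegularSp b τ) (hab : IsRegularSp (a - b) τ) :
    HasDerivAt (fun v => Spp v τ + Sp v τ * zeta1 v (τ / 2))
      (Spp a τ * (zeta1 (a - b) (τ / 2) + zeta1 b (τ / 2)) - Sp a τ * wp1 (a - b) (τ / 2)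
        - Spp (a - b) τ * Sp b τ) a := by
  have haddition : (fun v => Spp v τ + Sp v τ * zeta1 v (τ / 2)) =ᶠ[𝓝 a] fun v =>
      Sp v τ * (zeta1 (v - b) (τ / 2) + zeta1 b (τ / 2)) - Sp (v - b) τ * Sp b τ := by
    have hsub : Tendsto (· - b) (𝓝 a) (𝓝 (a - b)) := tendsto_id.sub_const b
    filter_upwards [ha.eventually, hsub.eventually hab.eventually] with v hv hvb
    simpa only [sub_add_cancel] using
      Sp_addition_formula hvb hb ((sub_add_cancel v b).symm ▸ hv)
  refine ((((ha.hasDerivAt_Sp.fun_mul ((hab.hasDerivAt_zeta1_half.comp_sub_const a b).add_const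
    (zeta1 b (τ / 2)))).fun_sub ((hab.hasDerivAt_Sp.comp_sub_const a b).mul_const
    (Sp b τ))).congr_of_eventuallyEq haddition)).congr_deriv ?_
  ring

end IsRegularSp

/-! ### The metric -/

lemma hasFDerivAt_comp_prodMk_differential {E : Type*} [NormedAddCommGroup E] [NormedSpace ℝ E]
    {F : ℂ × ℂ → ℂ} {f g : E → ℂ} {f' g' : E →L[ℝ] ℂ} {a b : ℂ} {x : E}
    (hF : HasFDerivAt F (differential a b) (f x, g x)) (hf : HasFDerivAt f f' x)
    (hg : HasFDerivAt g g' x) : HasFDerivAt (fun y => F (f y, g y)) (a • f' + b • g') x :=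
  HasFDerivAt.comp x (f := fun y => (f y, g y)) (hF.restrictScalars ℝ) (hf.prodMk hg)

section Egorov

variable {N : ℕ} {ξ : Fin N → (Fin N → ℝ) → ℂ} {τ : (Fin N → ℝ) → ℂ} {i k : Fin N}
  {x : Fin N → ℝ}

/-- The equations of the elliptic Gibbons–Tsarev system for `∂ξ_k/∂λ_j` and `∂²τ/∂λ_j∂λ_k`, at the
point `x`. -/
structure IsGibbonsTsarevAt (ξ : Fin N → (Fin N → ℝ) → ℂ) (τ : (Fin N → ℝ) → ℂ) (j k : Fin N)
    (x : Fin N → ℝ) : Prop where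
  pdC_xi : pdC j (ξ k) x = 1 / (4 * π * I)
    * (zeta1 (ξ j x - ξ k x) (τ x / 2) - zeta1 (ξ j x) (τ x / 2)) * pdC j τ x
  pdC_pdC_tau : pdC j (pdC k τ) x = 1 / (2 * π * I)
    * wp1 (ξ j x - ξ k x) (τ x / 2) * pdC j τ x * pdC k τ x

lemma differentiableAt_Sp_comp (h : IsRegularSp (ξ i x) (τ x)) (hξ : DifferentiableAt ℝ (ξ i) x)
    (hτ : DifferentiableAt ℝ τ x) : DifferentiableAt ℝ (fun y => Sp (ξ i y) (τ y)) x :=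
  (hasFDerivAt_comp_prodMk_differential h.hasFDerivAt_Sp hξ.hasFDerivAt
    hτ.hasFDerivAt).differentiableAt

lemma pdC_Sp_comp (hi : IsRegularSp (ξ i x) (τ x)) (hk : IsRegularSp (ξ k x) (τ x))
    (hik : IsRegularSp (ξ i x - ξ k x) (τ x)) (hξ : DifferentiableAt ℝ (ξ i) x)
    (hτ : DifferentiableAt ℝ τ x) (hGT : IsGibbonsTsarevAt ξ τ k i x) :
    pdC k (fun y => Sp (ξ i y) (τ y)) x = -(1 / (4 * π * I))
      * (Sp (ξ i x) (τ x) * wp1 (ξ i x - ξ k x) (τ x / 2)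
        + Sp (ξ k x) (τ x) * Spp (ξ i x - ξ k x) (τ x)) * pdC k τ x := by
  have hchain : pdC k (fun y => Sp (ξ i y) (τ y)) x = _ * pdC k (ξ i) x + _ * pdC k τ x :=
    congrArg (· (Pi.single k 1)) (hasFDerivAt_comp_prodMk_differential hi.hasFDerivAt_Sp
      hξ.hasFDerivAt hτ.hasFDerivAt).fderiv
  rw [hchain, hGT.pdC_xi, (hi.hasDerivAt_Spp_add_Sp_mul_zeta1_half hk hik).deriv, ← neg_sub (ξ i x),
    zeta1_neg]
  ring

lemma pdC_gMetric_eq (hS : DifferentiableAt ℝ (fun y => Sp (ξ i y) (τ y)) x)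
    (hi : DifferentiableAt ℝ (pdC i τ) x) :
    pdC k (gMetric ξ τ i) x = 1 / (4 * π * I)
      * (2 * Sp (ξ i x) (τ x) * pdC k (fun y => Sp (ξ i y) (τ y)) x * pdC i τ x
        + Sp (ξ i x) (τ x) ^ 2 * pdC k (pdC i τ) x) := by
  have h : HasFDerivAt (gMetric ξ τ i) _ x :=
    ((hS.hasFDerivAt.pow 2).const_mul (1 / (4 * π * I))).mul hi.hasFDerivAt
  rw [pdC, h.fderiv]
  simp only [pdC, Nat.add_one_sub_one, pow_one, nsmul_eq_mul, Nat.cast_ofNat, add_apply, smul_apply,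
    smul_eq_mul]
  ring

lemma pdC_gMetric (hi : IsRegularSp (ξ i x) (τ x)) (hk : IsRegularSp (ξ k x) (τ x))
    (hik : IsRegularSp (ξ i x - ξ k x) (τ x)) (hξ : DifferentiableAt ℝ (ξ i) x)
    (hτ : DifferentiableAt ℝ τ x) (hpdC : DifferentiableAt ℝ (pdC i τ) x)
    (hGT : IsGibbonsTsarevAt ξ τ k i x) :
    pdC k (gMetric ξ τ i) x = -(2 / (4 * π * I) ^ 2) * Sp (ξ i x) (τ x) * Sp (ξ k x) (τ x)
      * Spp (ξ i x - ξ k x) (τ x) * pdC i τ x * pdC k τ x := by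
  rw [pdC_gMetric_eq (differentiableAt_Sp_comp hi hξ hτ) hpdC, pdC_Sp_comp hi hk hik hξ hτ hGT,
    hGT.pdC_pdC_tau, ← neg_sub (ξ i x), wp1_neg]
  field

theorem metric_is_Egorov_general (hi : IsRegularSp (ξ i x) (τ x)) (hk : IsRegularSp (ξ k x) (τ x))
    (hik : IsRegularSp (ξ i x - ξ k x) (τ x)) (hξi : DifferentiableAt ℝ (ξ i) x)
    (hξk : DifferentiableAt ℝ (ξ k) x) (hτ : DifferentiableAt ℝ τ x)
    (hτi : DifferentiableAt ℝ (pdC i τ) x) (hτk : DifferentiableAt ℝ (pdC k τ) x)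
    (hGTik : IsGibbonsTsarevAt ξ τ i k x) (hGTki : IsGibbonsTsarevAt ξ τ k i x) :
    pdC k (gMetric ξ τ i) x = pdC i (gMetric ξ τ k) x
    ∧ pdC k (gMetric ξ τ i) x = -(2 / (4 * π * I) ^ 2) * Sp (ξ i x) (τ x) * Sp (ξ k x) (τ x)
      * Spp (ξ i x - ξ k x) (τ x) * pdC i τ x * pdC k τ x := by
  have hk_i := pdC_gMetric hi hk hik hξi hτ hτi hGTki
  have hi_k := pdC_gMetric hk hi (neg_sub (ξ i x) (ξ k x) ▸ hik.neg) hξk hτ hτk hGTik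
  rw [← neg_sub (ξ i x), Spp_neg] at hi_k
  exact ⟨by rw [hk_i, hi_k]; ring, hk_i⟩

lemma differentiableAt_pdC (hτ : ContDiffAt ℝ 2 τ x) (i : Fin N) :
    DifferentiableAt ℝ (pdC i τ) x :=
  ((hτ.fderiv_right (m := 1) le_rfl).differentiableAt one_ne_zero).clm_apply
    (differentiableAt_const _)

end Egorov

/-- The metric is of Egorov type (Proposition of Section 6):
∂g_i/∂λ_k = ∂g_k/∂λ_i, both sides being
−(2/(4πi)²) S'(ξ_i,τ) S'(ξ_k,τ) S''(ξ_i−ξ_k,τ) (∂τ/∂λ_i)(∂τ/∂λ_k). -/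
theorem metric_is_Egorov
    (N : ℕ) (U : Set (Fin N → ℝ)) (hU : IsOpen U)
    (ξ : Fin N → (Fin N → ℝ) → ℂ) (τ : (Fin N → ℝ) → ℂ)
    (hξC2 : ∀ i, ContDiffOn ℝ 2 (ξ i) U)
    (hτC2 : ContDiffOn ℝ 2 τ U)
    (hup : ∀ x ∈ U, 0 < (τ x).im)
    -- the elliptic Gibbons–Tsarev system
    (hGT1 : ∀ j k : Fin N, j ≠ k → ∀ x ∈ U,
      pdC j (ξ k) x = 1 / (4 * (Real.pi : ℂ) * Complex.I)
        * (zeta1 (ξ j x - ξ k x) (τ x / 2) - zeta1 (ξ j x) (τ x / 2)) * pdC j τ x)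
    (hGT2 : ∀ j k : Fin N, j ≠ k → ∀ x ∈ U,
      pdC k (pdC j τ) x = 1 / (2 * (Real.pi : ℂ) * Complex.I)
        * wp1 (ξ k x - ξ j x) (τ x / 2) * pdC k τ x * pdC j τ x)
    -- nonvanishing of the theta-function values appearing in denominators
    (hnz1 : ∀ i, ∀ x ∈ U, theta1 (ξ i x) (τ x) ≠ 0)
    (hnz2 : ∀ i, ∀ x ∈ U, theta4 (ξ i x) (τ x) ≠ 0)
    (hnz3 : ∀ i, ∀ x ∈ U, theta1 (ξ i x) (τ x / 2) ≠ 0)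
    (hnz4 : ∀ i j : Fin N, i ≠ j → ∀ x ∈ U, theta1 (ξ i x - ξ j x) (τ x) ≠ 0)
    (hnz5 : ∀ i j : Fin N, i ≠ j → ∀ x ∈ U, theta4 (ξ i x - ξ j x) (τ x) ≠ 0)
    (hnz6 : ∀ i j : Fin N, i ≠ j → ∀ x ∈ U, theta1 (ξ i x - ξ j x) (τ x / 2) ≠ 0)
    : ∀ i k : Fin N, i ≠ k → ∀ x ∈ U,
      pdC k (gMetric ξ τ i) x = pdC i (gMetric ξ τ k) x
      ∧ pdC k (gMetric ξ τ i) x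
          = -(2 / (4 * (Real.pi : ℂ) * Complex.I) ^ 2)
            * Sp (ξ i x) (τ x) * Sp (ξ k x) (τ x) * Spp (ξ i x - ξ k x) (τ x)
            * pdC i τ x * pdC k τ x := by
  intro i k hik x hx
  have hreg (j : Fin N) : IsRegularSp (ξ j x) (τ x) := ⟨hup x hx, hnz1 j x hx, hnz2 j x hx⟩
  have hregdiff : IsRegularSp (ξ i x - ξ k x) (τ x) :=
    ⟨hup x hx, hnz4 i k hik x hx, hnz5 i k hik x hx⟩
  have hξ (j : Fin N) : DifferentiableAt ℝ (ξ j) x :=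
    ((hξC2 j).contDiffAt (hU.mem_nhds hx)).differentiableAt two_ne_zero
  have hτ : ContDiffAt ℝ 2 τ x := hτC2.contDiffAt (hU.mem_nhds hx)
  have hGT (j l : Fin N) (hjl : j ≠ l) : IsGibbonsTsarevAt ξ τ j l x :=
    ⟨hGT1 j l hjl x hx, hGT2 l j hjl.symm x hx⟩
  exact metric_is_Egorov_general (hreg i) (hreg k) hregdiff (hξ i) (hξ k)
    (hτ.differentiableAt two_ne_zero) (differentiableAt_pdC hτ i) (differentiableAt_pdC hτ k)
    (hGT i k hik) (hGT k i hik.symm)
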